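/- Let N ∈ ℕ, N ≥ 1, β = i − 1 and D = {0, 1, −1, i, −i}. If a Gaussian integer x ∈ ℤ[i] has a 3-NAF (β, D)-representation containing exactly N nonzero digits, then x has at most r_N optimal representations, where (r_N) is defined by r_0 = r_1 = 1, r_2 = 3, r_3 = 8, r_4 = 17 and r_{N+3} = r_{N+2} + 2 r_{N+1} + 2 r_N for N ≥ 2. -/

import Mathlib

/-!
The number of optimal representations is bounded by the number of normalized representations of
weight at most `N`, where `N` is the weight of the 3-NAF. Write `E x k` (`repCount`) for the number
of normalized representations of `x` of weight `< k`. Splitting off the least significant digit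
gives `E (β y) k ≤ E y k`, and `E x k ≤ ∑ E ((x - d) / β) (k - 1)` over the four units `d` when `x`
is not divisible by `β`.

A 3-NAF is built from `0` by the moves `t ↦ β t` and `t ↦ s + β³ t` with `s` a unit (`IsNafValue`).
Iterating the recursion along such a move expresses counts at `z + c`, for a small carry `c`, by
counts at `t + c'`. With `deficit c ∈ {0, 1, 2}` one has, for `z` with a 3-NAF of weight `N`:

* `E (z + c) k = 0` if `k + deficit c ≤ N` (`vanishing`; for `c = 0` this is the optimality of the
  3-NAF), a finite verification on the 21 carries of norm at most `5`;
* hence only critical counts `a c = E (z + c) (N + 1 - deficit c)` contribute to `E z (N + 1)`, and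
  those that occur have `c` equal to `0`, a unit, or a unit times `1 - i`. If `a` belongs to `t` and `b` to `z = s + β³ t`, then with
  `p = a s`, `q = a (-i s)`, `d = a ((1 - i) s)`:
  `b 0 ≤ a 0 + 2p + 2q + d`, `b s ≤ p + q + d`, `b (i s) ≤ p`, `b (-s) ≤ a 0`, `b (-i s) ≤ q`,
  `b ((1 + i) s) ≤ p`, `b ((1 - i) s) ≤ q`, and the other two vanish.

The bounds collected in `Bounds` (on `a 0`, `a u`, `a 0 + a u`, `a u + a (-i u) + a ((1 - i) u)` and
`a 0 + 2 a u + 2 a (-i u) + a ((1 - i) u)`) are preserved by both moves, thanks to the recurrence of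
`rseq`; the first of them is the theorem.
-/

open Matrix

noncomputable section

/-- The imaginary unit `i` in the Gaussian integers. -/
def gI : GaussianInt := ⟨0, 1⟩

/-- The base `β = i - 1`. -/
def gβ : GaussianInt := ⟨-1, 1⟩

/-- The digit set `D = {0, 1, -1, i, -i}`. -/
def gD : Set GaussianInt := {0, 1, -1, gI, -gI}

/-- Value of a digit string `d_{n-1} ⋯ d_0`, given as a list with the least
significant digit first: `gval [d_0, d_1, …, d_{n-1}] = Σ d_j β^j`. -/
def gval (l : List GaussianInt) : GaussianInt :=
  l.foldr (fun d acc => d + gβ * acc) 0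

/-- `l` (least significant digit first) is a `(β, D)`-representation of `x`. -/
def gIsRep (x : GaussianInt) (l : List GaussianInt) : Prop :=
  (∀ d ∈ l, d ∈ gD) ∧ gval l = x

/-- A representation is normalized if it is empty or its leading digit
(the last entry of the LSD-first list) is nonzero. -/
def gNormalized (l : List GaussianInt) : Prop := l.getLast? ≠ some 0

/-- Number of nonzero digits (Hamming weight). -/
def gweight (l : List GaussianInt) : ℕ := (l.filter (fun d => d ≠ 0)).length

/-- `W`-NAF property: among any `W` consecutive digits at most one is nonzero. -/
def gNAF (W : ℕ) (l : List GaussianInt) : Prop :=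
  ∀ j k : ℕ, j < k → k < j + W → l.getD j 0 ≠ 0 → l.getD k 0 = 0

/-- A representation of `x` is optimal if it is normalized and its number of
nonzero digits is minimal among all representations of `x`. -/
def gOptimal (x : GaussianInt) (l : List GaussianInt) : Prop :=
  gIsRep x l ∧ gNormalized l ∧
    ∀ l' : List GaussianInt, gIsRep x l' → gweight l ≤ gweight l'

/-- The number of optimal representations of `x`. -/
def gnumOpt (x : GaussianInt) : ℕ := Nat.card {l : List GaussianInt // gOptimal x l}

/-- The sequence `r_N`: `r_0 = r_1 = 1`, `r_2 = 3`, `r_3 = 8`, `r_4 = 17`,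
and `r_{N+3} = r_{N+2} + 2 r_{N+1} + 2 r_N` for `N ≥ 2`. -/
def rseq : ℕ → ℕ
  | 0 => 1
  | 1 => 1
  | 2 => 3
  | 3 => 8
  | 4 => 17
  | (n + 5) => rseq (n + 4) + 2 * rseq (n + 3) + 2 * rseq (n + 2)

/-! ### Counting representations of bounded weight -/

/-- The normalized representations of `x` with fewer than `k` nonzero digits. -/
def repSet (x : GaussianInt) (k : ℕ) : Set (List GaussianInt) :=
  {l | gIsRep x l ∧ gNormalized l ∧ gweight l < k}

/-- The number of normalized representations of `x` with fewer than `k` nonzero digits. -/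
def repCount (x : GaussianInt) (k : ℕ) : ℕ := (repSet x k).ncard

/-- Divisibility by `β`, in the form of the parity of `re + im`. -/
def IsEv (x : GaussianInt) : Prop := (x.re + x.im) % 2 = 0

instance (x : GaussianInt) : Decidable (IsEv x) := by unfold IsEv; infer_instance

/-- The quotient `x / β = x (-1 - i) / 2`, meaningful when `β` divides `x`. -/
def gdiv (x : GaussianInt) : GaussianInt := ⟨(x.im - x.re) / 2, (-x.re - x.im) / 2⟩

/-- The nonzero digits. -/
def gunits : List GaussianInt := [1, -1, gI, -gI]

lemma beta_mul_gdiv {x : GaussianInt} (h : IsEv x) : gβ * gdiv x = x := by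
  unfold IsEv at h
  ext <;> simp [gβ, gdiv] <;> omega

lemma gdiv_beta_mul (y : GaussianInt) : gdiv (gβ * y) = y := by
  ext <;> simp [gβ, gdiv] <;> omega

lemma isEv_beta_mul (y : GaussianInt) : IsEv (gβ * y) := by
  simp [gβ, IsEv]; omega

lemma isEv_add_beta_mul (d y : GaussianInt) : IsEv (d + gβ * y) ↔ IsEv d := by
  simp [gβ, IsEv]; omega

lemma not_isEv_of_mem_gunits : ∀ d ∈ gunits, ¬ IsEv d := by decide

lemma ne_zero_of_mem_gunits : ∀ d ∈ gunits, d ≠ 0 := by decide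

lemma mem_gD_iff {d : GaussianInt} : d ∈ gD ↔ d = 0 ∨ d ∈ gunits := by
  simp [gD, gunits]

lemma isEv_sub {x d : GaussianInt} (hx : ¬ IsEv x) (hd : ¬ IsEv d) : IsEv (x - d) := by
  unfold IsEv at *
  simp only [Zsqrtd.re_sub, Zsqrtd.im_sub]
  omega

lemma gval_cons (d : GaussianInt) (l : List GaussianInt) :
    gval (d :: l) = d + gβ * gval l := rfl

lemma gweight_zero_cons (l : List GaussianInt) : gweight (0 :: l) = gweight l := by
  simp [gweight]

lemma gweight_cons {d : GaussianInt} (hd : d ≠ 0) (l : List GaussianInt) :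
    gweight (d :: l) = gweight l + 1 := by
  simp [gweight, hd]

lemma gNormalized_tail {d : GaussianInt} {l : List GaussianInt} (h : gNormalized (d :: l)) :
    gNormalized l := by
  cases l with
  | nil => simp [gNormalized]
  | cons e l => simpa [gNormalized, List.getLast?_cons_cons] using h

lemma eq_nil_of_gval_eq_zero (l : List GaussianInt) (hD : ∀ d ∈ l, d ∈ gD)
    (hn : gNormalized l) (h0 : gval l = 0) : l = [] := by
  induction l with
  | nil => rfl
  | cons d l ih =>
    exfalso
    rw [gval_cons] at h0
    have hev : IsEv d := by
      rw [← isEv_add_beta_mul d (gval l), h0]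
      decide
    have hd : d = 0 := by
      rcases mem_gD_iff.1 (hD d (by simp)) with h | h
      · exact h
      · exact absurd hev (not_isEv_of_mem_gunits d h)
    subst hd
    have hz : gval l = 0 := by
      have := gdiv_beta_mul (gval l)
      rw [zero_add] at h0
      rw [h0] at this
      rw [← this]
      decide
    have := ih (fun e he => hD e (by simp [he])) (gNormalized_tail hn) hz
    subst this
    simp [gNormalized] at hn

lemma repSet_zero (k : ℕ) : repSet 0 k ⊆ {[]} := by
  rintro l ⟨⟨hD, hv⟩, hn, -⟩
  exact eq_nil_of_gval_eq_zero l hD hn hv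

lemma repSet_zero_right (x : GaussianInt) : repSet x 0 = ∅ := by
  ext l; simp [repSet]

lemma repSet_even {x : GaussianInt} (hx : x ≠ 0) (he : IsEv x) (k : ℕ) :
    repSet x k ⊆ List.cons 0 '' repSet (gdiv x) k := by
  rintro l ⟨⟨hD, hv⟩, hn, hw⟩
  cases l with
  | nil => exact absurd hv.symm hx
  | cons d l =>
    rw [gval_cons] at hv
    rcases mem_gD_iff.1 (hD d (by simp)) with rfl | hd
    · rw [gweight_zero_cons] at hw
      refine ⟨l, ⟨⟨fun e he => hD e (by simp [he]), ?_⟩, gNormalized_tail hn, hw⟩, rfl⟩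
      rw [← hv, zero_add, gdiv_beta_mul]
    · rw [← hv, isEv_add_beta_mul] at he
      exact absurd he (not_isEv_of_mem_gunits d hd)

lemma repSet_odd {x : GaussianInt} (he : ¬ IsEv x) (k : ℕ) :
    repSet x k ⊆ ⋃ d ∈ gunits, List.cons d '' repSet (gdiv (x - d)) (k - 1) := by
  rintro l ⟨⟨hD, hv⟩, hn, hw⟩
  cases l with
  | nil =>
    rw [← hv] at he
    exact absurd (by decide) he
  | cons d l =>
    rw [gval_cons] at hv
    rcases mem_gD_iff.1 (hD d (by simp)) with rfl | hd
    · rw [← hv, isEv_add_beta_mul] at he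
      exact absurd (by decide) he
    · rw [gweight_cons (ne_zero_of_mem_gunits d hd)] at hw
      simp only [Set.mem_iUnion]
      refine ⟨d, hd, l, ⟨⟨fun e he => hD e (by simp [he]), ?_⟩, gNormalized_tail hn, by omega⟩, rfl⟩
      rw [← hv, add_sub_cancel_left, gdiv_beta_mul]

/-- The recursion terminates: odd steps lower the weight budget, even steps lower the norm. -/
lemma repSet_finite (x : GaussianInt) (k : ℕ) : (repSet x k).Finite := by
  induction k generalizing x with
  | zero => rw [repSet_zero_right]; exact Set.finite_empty
  | succ k ih =>
    induction hn : x.norm.natAbs using Nat.strong_induction_on generalizing x with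
    | _ n ihn =>
      by_cases hx : x = 0
      · subst hx
        exact (Set.finite_singleton _).subset (repSet_zero _)
      by_cases he : IsEv x
      · refine Set.Finite.subset (Set.Finite.image _ (ihn _ ?_ (gdiv x) rfl)) (repSet_even hx he _)
        have h1 := beta_mul_gdiv he
        have h2 : x.norm = 2 * (gdiv x).norm := by
          conv_lhs => rw [← h1, Zsqrtd.norm_mul]
          rfl
        have h3 : x.norm ≠ 0 := by
          rw [Ne, Zsqrtd.norm_eq_zero_iff (by norm_num)]
          exact hx
        omega
      · refine Set.Finite.subset ?_ (repSet_odd he _)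
        exact Set.Finite.biUnion (List.finite_toSet gunits) fun d _ => (ih _).image _

lemma repCount_zero_right (x : GaussianInt) : repCount x 0 = 0 := by
  rw [repCount, repSet_zero_right, Set.ncard_empty]

lemma repCount_zero_le (k : ℕ) : repCount 0 k ≤ 1 := by
  have := Set.ncard_le_ncard (repSet_zero k) (Set.finite_singleton _)
  simpa [repCount] using this

lemma repCount_beta_mul_le (y : GaussianInt) (k : ℕ) : repCount (gβ * y) k ≤ repCount y k := by
  by_cases hx : gβ * y = 0
  · have : y = 0 := by
      have := gdiv_beta_mul y
      rw [hx] at this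
      rw [← this]
      decide
    rw [hx, this]
  · have h := repSet_even hx (isEv_beta_mul y) k
    rw [gdiv_beta_mul] at h
    exact (Set.ncard_le_ncard h ((repSet_finite _ _).image _)).trans
      (Set.ncard_image_le (repSet_finite _ _))

lemma repCount_odd_le {x : GaussianInt} (he : ¬ IsEv x) (k : ℕ) :
    repCount x k ≤ (gunits.map fun d => repCount (gdiv (x - d)) (k - 1)).sum := by
  have h := repSet_odd he k
  have hf : ∀ d, (List.cons d '' repSet (gdiv (x - d)) (k - 1)).Finite :=
    fun d => (repSet_finite _ _).image _
  have hc : ∀ d, (List.cons d '' repSet (gdiv (x - d)) (k - 1)).ncard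
      ≤ repCount (gdiv (x - d)) (k - 1) := fun d => Set.ncard_image_le (repSet_finite _ _)
  simp only [gunits, List.mem_cons, List.not_mem_nil, or_false, Set.iUnion_iUnion_eq_or_left,
    Set.iUnion_iUnion_eq_left] at h
  have h1 := Set.ncard_le_ncard h
    ((hf _).union ((hf _).union ((hf _).union (hf _))))
  simp only [gunits, List.map_cons, List.map_nil, List.sum_cons, List.sum_nil]
  refine h1.trans ((Set.ncard_union_le _ _).trans (add_le_add (hc _) ?_))
  refine (Set.ncard_union_le _ _).trans (add_le_add (hc _) ?_)
  refine (Set.ncard_union_le _ _).trans (add_le_add (hc _) (hc _))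

/-! ### Propagation of carries -/

/-- Iterating the recursion `j` times on `c + β ^ j * t`: the list of pairs `(c', m')` such that
`c' + t` is reached from it after spending `m' - m` nonzero digits. -/
def expand : ℕ → GaussianInt → ℕ → List (GaussianInt × ℕ)
  | 0, c, m => [(c, m)]
  | j + 1, c, m =>
    if IsEv c then expand j (gdiv c) m
    else gunits.flatMap fun d => expand j (gdiv (c - d)) (m + 1)

lemma repCount_le_expand (t : GaussianInt) (k j : ℕ) (c : GaussianInt) (m : ℕ) :
    repCount (c + gβ ^ j * t) (k - m)
      ≤ ((expand j c m).map fun p => repCount (p.1 + t) (k - p.2)).sum := by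
  induction j generalizing c m with
  | zero => simp [expand]
  | succ j ih =>
    have key : ∀ c', IsEv c' → c' + gβ ^ (j + 1) * t = gβ * (gdiv c' + gβ ^ j * t) := by
      intro c' h
      rw [mul_add, beta_mul_gdiv h]
      ring
    by_cases he : IsEv c
    · rw [expand, if_pos he, key c he]
      exact (repCount_beta_mul_le _ _).trans (ih _ _)
    · have he' : ¬ IsEv (c + gβ ^ (j + 1) * t) := by
        rw [pow_succ', mul_assoc, isEv_add_beta_mul]
        exact he
      rw [expand, if_neg he]
      refine (repCount_odd_le he' _).trans ?_
      rw [List.map_flatMap, List.flatMap, List.sum_flatten, List.map_map]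
      refine List.sum_le_sum fun d hd => ?_
      have h1 : gdiv (c + gβ ^ (j + 1) * t - d) = gdiv (c - d) + gβ ^ j * t := by
        rw [show c + gβ ^ (j + 1) * t - d = (c - d) + gβ ^ (j + 1) * t by ring,
          key _ (isEv_sub he (not_isEv_of_mem_gunits d hd)), gdiv_beta_mul]
      rw [h1, Nat.sub_sub]
      exact ih _ _

/-- The 21 Gaussian integers of norm at most `5`. -/
def carries : List GaussianInt :=
  [0, 1, -1, gI, -gI, ⟨1, 1⟩, ⟨1, -1⟩, ⟨-1, 1⟩, ⟨-1, -1⟩, 2, -2, ⟨0, 2⟩, ⟨0, -2⟩,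
    ⟨2, 1⟩, ⟨2, -1⟩, ⟨-2, 1⟩, ⟨-2, -1⟩, ⟨1, 2⟩, ⟨1, -2⟩, ⟨-1, 2⟩, ⟨-1, -2⟩]

/-- For `c ∈ carries`, an upper bound for the drop of the minimal weight when `c` is added to a
Gaussian integer; see `vanishing`. -/
def deficit (c : GaussianInt) : ℕ :=
  if c = 0 then 0 else if c.re * c.re + c.im * c.im ≤ 4 then 1 else 2

lemma expand_shift : ∀ c ∈ carries, ∀ p ∈ expand 1 c 0,
    p.1 ∈ carries ∧ deficit p.1 ≤ deficit c + p.2 := by decide +kernel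

lemma expand_digit : ∀ s ∈ gunits, ∀ c ∈ carries, ∀ p ∈ expand 3 (c + s) 0,
    p.1 ∈ carries ∧ deficit p.1 + 1 ≤ deficit c + p.2 := by decide +kernel

/-- `IsNafValue z N`: the Gaussian integer `z` is the value of a 3-NAF of weight `N`. -/
inductive IsNafValue : GaussianInt → ℕ → Prop
  | zero : IsNafValue 0 0
  | shift {t : GaussianInt} {N : ℕ} : IsNafValue t N → IsNafValue (gβ * t) N
  | digit {t : GaussianInt} {N : ℕ} (s : GaussianInt) : s ∈ gunits → IsNafValue t N →
      IsNafValue (s + gβ ^ 3 * t) (N + 1)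

lemma repCount_shift_le (t c : GaussianInt) (k : ℕ) :
    repCount (c + gβ * t) k ≤ ((expand 1 c 0).map fun p => repCount (p.1 + t) (k - p.2)).sum := by
  simpa using repCount_le_expand t k 1 c 0

lemma repCount_digit_le (s t c : GaussianInt) (k : ℕ) :
    repCount (c + (s + gβ ^ 3 * t)) k
      ≤ ((expand 3 (c + s) 0).map fun p => repCount (p.1 + t) (k - p.2)).sum := by
  simpa [add_assoc] using repCount_le_expand t k 3 (c + s) 0

/-- Adding a carry `c` lowers the minimal weight by at most `deficit c`; for `c = 0` this says
that 3-NAFs have minimal weight. -/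
lemma vanishing {z : GaussianInt} {N : ℕ} (h : IsNafValue z N) :
    ∀ c ∈ carries, ∀ k, k + deficit c ≤ N → repCount (c + z) k = 0 := by
  induction h with
  | zero =>
    intro c _ k hk
    obtain rfl : k = 0 := by omega
    exact repCount_zero_right _
  | @shift t N _ ih =>
    intro c hc k hk
    refine Nat.le_zero.1 ((repCount_shift_le t c k).trans (le_of_eq (List.sum_eq_zero ?_)))
    simp only [List.mem_map]
    rintro _ ⟨p, hp, rfl⟩
    obtain ⟨h1, h2⟩ := expand_shift c hc p hp
    rcases Nat.eq_zero_or_pos (k - p.2) with h0 | h0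
    · rw [h0, repCount_zero_right]
    · exact ih _ h1 _ (by omega)
  | @digit t N s hs _ ih =>
    intro c hc k hk
    refine Nat.le_zero.1 ((repCount_digit_le s t c k).trans (le_of_eq (List.sum_eq_zero ?_)))
    simp only [List.mem_map]
    rintro _ ⟨p, hp, rfl⟩
    obtain ⟨h1, h2⟩ := expand_digit s hs c hc p hp
    rcases Nat.eq_zero_or_pos (k - p.2) with h0 | h0
    · rw [h0, repCount_zero_right]
    · exact ih _ h1 _ (by omega)

/-- The number of representations of `c + z` of the smallest weight not excluded by `vanishing`,
where `N` is the weight of the 3-NAF of `z`. -/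
def critCount (z : GaussianInt) (N : ℕ) (c : GaussianInt) : ℕ :=
  repCount (c + z) (N + 1 - deficit c)

lemma sum_map_le_filter {α : Type*} (L : List α) (P : α → Bool) (f g : α → ℕ)
    (h1 : ∀ x ∈ L, P x = true → f x ≤ g x) (h2 : ∀ x ∈ L, P x = false → f x = 0) :
    (L.map f).sum ≤ ((L.filter P).map g).sum := by
  induction L with
  | nil => simp
  | cons x L ih =>
    have ih' := ih (fun y hy => h1 y (by simp [hy])) (fun y hy => h2 y (by simp [hy]))
    cases hP : P x with
    | true =>
      have := h1 x (by simp) hP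
      simp only [List.map_cons, List.sum_cons, List.filter_cons, hP, if_true]
      omega
    | false =>
      have := h2 x (by simp) hP
      simp [hP]
      omega

/-- The carries contributing to `critCount (β t) N c`. -/
def shiftCrit (c : GaussianInt) : List GaussianInt :=
  ((expand 1 c 0).filter fun p => deficit p.1 = deficit c + p.2).map Prod.fst

/-- The carries contributing to `critCount (s + β³ t) (N + 1) c`. -/
def digitCrit (s c : GaussianInt) : List GaussianInt :=
  ((expand 3 (c + s) 0).filter fun p => deficit p.1 + 1 = deficit c + p.2).map Prod.fst

lemma critCount_shift {t : GaussianInt} {N : ℕ} (h : IsNafValue t N) {c : GaussianInt}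
    (hc : c ∈ carries) :
    critCount (gβ * t) N c ≤ ((shiftCrit c).map (critCount t N)).sum := by
  refine (repCount_shift_le t c _).trans ?_
  rw [shiftCrit, List.map_map]
  refine sum_map_le_filter _ _ _ _ ?_ ?_
  · intro p hp hP
    have hP : deficit p.1 = deficit c + p.2 := by simpa using hP
    simp only [Function.comp, critCount]
    rw [show N + 1 - deficit c - p.2 = N + 1 - deficit p.1 by omega]
  · intro p hp hP
    have hP : ¬ deficit p.1 = deficit c + p.2 := by simpa using hP
    obtain ⟨h1, h2⟩ := expand_shift c hc p hp
    rcases Nat.eq_zero_or_pos (N + 1 - deficit c - p.2) with h0 | h0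
    · rw [h0, repCount_zero_right]
    · exact vanishing h _ h1 _ (by omega)

lemma critCount_digit {t : GaussianInt} {N : ℕ} (h : IsNafValue t N) {s c : GaussianInt}
    (hs : s ∈ gunits) (hc : c ∈ carries) :
    critCount (s + gβ ^ 3 * t) (N + 1) c ≤ ((digitCrit s c).map (critCount t N)).sum := by
  refine (repCount_digit_le s t c _).trans ?_
  rw [digitCrit, List.map_map]
  refine sum_map_le_filter _ _ _ _ ?_ ?_
  · intro p hp hP
    have hP : deficit p.1 + 1 = deficit c + p.2 := by simpa using hP
    simp only [Function.comp, critCount]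
    rw [show N + 1 + 1 - deficit c - p.2 = N + 1 - deficit p.1 by omega]
  · intro p hp hP
    have hP : ¬ deficit p.1 + 1 = deficit c + p.2 := by simpa using hP
    obtain ⟨h1, h2⟩ := expand_digit s hs c hc p hp
    rcases Nat.eq_zero_or_pos (N + 1 + 1 - deficit c - p.2) with h0 | h0
    · rw [h0, repCount_zero_right]
    · exact vanishing h _ h1 _ (by omega)

/-- The carry `(1 - i) u`, the sum of the adjacent units `u` and `-i u`. -/
def dg (u : GaussianInt) : GaussianInt := ⟨1, -1⟩ * u

lemma shiftCrit_eq : shiftCrit 0 = [0] ∧ ∀ u ∈ gunits,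
    shiftCrit u = [] ∧ shiftCrit (dg u) = [-u] := by decide +kernel

lemma digitCrit_eq : ∀ s ∈ gunits,
    (digitCrit s 0).Perm [0, s, s, -gI * s, -gI * s, dg s] ∧
    (digitCrit s s).Perm [s, -gI * s, dg s] ∧
    digitCrit s (gI * s) = [s] ∧
    digitCrit s (-s) = [0] ∧
    digitCrit s (-gI * s) = [-gI * s] ∧
    digitCrit s (dg s) = [-gI * s] ∧
    digitCrit s (dg (gI * s)) = [s] ∧
    digitCrit s (dg (-s)) = [] ∧
    digitCrit s (dg (-gI * s)) = [] := by decide +kernel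

lemma gunits_rot : ∀ s ∈ gunits, ∀ u ∈ gunits,
    u = s ∨ u = gI * s ∨ u = -s ∨ u = -gI * s := by decide +kernel

lemma gunits_mul : ∀ s ∈ gunits,
    -gI * s ∈ gunits ∧ -s ∈ gunits ∧ gI * s ∈ gunits ∧
    -gI * (gI * s) = s ∧ -gI * (-s) = gI * s ∧ -gI * (-gI * s) = -s := by decide +kernel

lemma mem_carries : ∀ s ∈ gunits, s ∈ carries ∧ dg s ∈ carries := by decide +kernel

/-! ### The sequences -/

/-- `rseq` shifted by one, with the value `0` in front. -/
def rho : ℕ → ℕ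
  | 0 => 0
  | n + 1 => rseq n

/-- The bound for the sum of the critical counts at two adjacent units and at their sum. -/
def gseq : ℕ → ℕ
  | 0 => 0
  | 1 => 1
  | n + 2 => gseq (n + 1) + 2 * rseq n

lemma rseq_rec (n : ℕ) : rseq (n + 5) = rseq (n + 4) + 2 * rseq (n + 3) + 2 * rseq (n + 2) := rfl

lemma seq_aux (n : ℕ) : rseq (n + 1) ≤ rseq (n + 2) ∧ rseq (n + 2) ≤ rseq (n + 3) ∧
    rseq (n + 3) ≤ rseq (n + 4) := by
  induction n with
  | zero => decide
  | succ n ih =>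
    obtain ⟨h1, h2, h3⟩ := ih
    refine ⟨h2, h3, ?_⟩
    have := rseq_rec n
    show rseq (n + 4) ≤ rseq (n + 5)
    omega

lemma gseq_upper (n : ℕ) : 2 * gseq (n + 3) + rseq (n + 2) ≤ 2 * rseq (n + 3) ∧
    rseq (n + 3) + rseq (n + 2) ≤ gseq (n + 4) := by
  induction n using Nat.strong_induction_on with
  | _ n ih =>
    match n with
    | 0 => decide
    | 1 => decide
    | 2 => decide
    | n + 3 =>
      have h := ih (n + 2) (by omega)
      have e1 : gseq (n + 6) = gseq (n + 5) + 2 * rseq (n + 4) := rfl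
      have e2 : gseq (n + 7) = gseq (n + 6) + 2 * rseq (n + 5) := rfl
      have r1 : rseq (n + 6) = rseq (n + 5) + 2 * rseq (n + 4) + 2 * rseq (n + 3) := rfl
      have r2 := rseq_rec n
      have m := seq_aux n
      have m' := seq_aux (n + 1)
      simp only [Nat.add_assoc, Nat.reduceAdd] at *
      omega

lemma seq_facts (N : ℕ) :
    gseq N ≤ rho (N + 1) ∧ gseq N + 2 * rho N ≤ gseq (N + 1) ∧
    rho (N + 1) + rho N ≤ gseq (N + 1) ∧ rho N ≤ gseq N ∧
    rho (N + 2) + 2 * gseq N + 3 * rho N ≤ rho (N + 3) ∧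
    rho (N + 2) + 2 * rho (N + 1) + 2 * rho N ≤ rho (N + 3) ∧
    rho (N + 1) + rho N ≤ rho (N + 2) := by
  match N with
  | 0 => decide
  | 1 => decide
  | 2 => decide
  | n + 3 =>
    have h := gseq_upper n
    have e1 : gseq (n + 4) = gseq (n + 3) + 2 * rseq (n + 2) := rfl
    have e0 : gseq (n + 3) = gseq (n + 2) + 2 * rseq (n + 1) := rfl
    have r2 := rseq_rec n
    have m := seq_aux n
    have d0 : rho (n + 3) = rseq (n + 2) := rfl
    have d1 : rho (n + 4) = rseq (n + 3) := rfl
    have d2 : rho (n + 5) = rseq (n + 4) := rfl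
    have d3 : rho (n + 6) = rseq (n + 5) := rfl
    have low : rseq (n + 2) ≤ gseq (n + 3) := by
      match n with
      | 0 => decide
      | k + 1 =>
        have := (gseq_upper k).2
        show rseq (k + 3) ≤ gseq (k + 4)
        omega
    have low2 : rseq (n + 2) + rseq (n + 3) ≤ rseq (n + 4) := by
      match n with
      | 0 => decide
      | k + 1 =>
        have := rseq_rec k
        have := (seq_aux k)
        show rseq (k + 3) + rseq (k + 4) ≤ rseq (k + 5)
        omega
    simp only [Nat.add_assoc, Nat.reduceAdd] at *
    omega

/-! ### The invariant -/

/-- The linear inequalities on critical counts that are propagated along a 3-NAF of weight `N`. -/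
structure Bounds (a : GaussianInt → ℕ) (N : ℕ) : Prop where
  zero : a 0 ≤ rho (N + 1)
  unit : ∀ u ∈ gunits, a u ≤ rho N
  zeroUnit : ∀ u ∈ gunits, a 0 + a u ≤ rho (N + 1) + rho N
  adj : ∀ u ∈ gunits, a u + a (-gI * u) + a (dg u) ≤ gseq N
  full : ∀ u ∈ gunits, a 0 + 2 * a u + 2 * a (-gI * u) + a (dg u) ≤ rho (N + 2)

lemma Bounds.base : Bounds (critCount 0 0) 0 := by
  have h0 : critCount 0 0 0 ≤ 1 := by
    simpa [critCount, deficit] using repCount_zero_le 1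
  have hz : ∀ c, c ≠ 0 → critCount 0 0 c = 0 := by
    intro c hc
    have : 0 + 1 - deficit c = 0 := by
      unfold deficit
      rw [if_neg hc]
      split_ifs <;> rfl
    rw [critCount, this, repCount_zero_right]
  have hu : ∀ u ∈ gunits, critCount 0 0 u = 0 := fun u hu => hz u (ne_zero_of_mem_gunits u hu)
  have hd : ∀ u ∈ gunits, critCount 0 0 (dg u) = 0 := fun u hu =>
    hz _ ((by decide +kernel : ∀ u ∈ gunits, dg u ≠ 0) u hu)
  have r1 : rho 1 = 1 := rfl
  have r2 : rho 2 = 1 := rfl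
  refine ⟨h0, fun u h => ?_, fun u h => ?_, fun u h => ?_, fun u h => ?_⟩
  · simp [hu u h]
  · rw [hu u h]; exact h0
  · rw [hu u h, hd u h, hu _ (gunits_mul u h).1]; exact le_rfl
  · rw [hu u h, hd u h, hu _ (gunits_mul u h).1]; exact h0

lemma Bounds.shift {t : GaussianInt} {N : ℕ} (h : IsNafValue t N) (hb : Bounds (critCount t N) N) :
    Bounds (critCount (gβ * t) N) N := by
  obtain ⟨s0, su⟩ := shiftCrit_eq
  have h0 : critCount (gβ * t) N 0 ≤ critCount t N 0 := by
    simpa [s0] using critCount_shift h (c := 0) (by decide)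
  have hu : ∀ u ∈ gunits, critCount (gβ * t) N u = 0 := fun u hu => by
    simpa [(su u hu).1] using critCount_shift h (mem_carries u hu).1
  have hd : ∀ u ∈ gunits, critCount (gβ * t) N (dg u) ≤ critCount t N (-u) := fun u hu => by
    simpa [(su u hu).2] using critCount_shift h (mem_carries u hu).2
  obtain ⟨f1, f2, f3, f4, f5, f6, f7⟩ := seq_facts N
  have hz := hb.zero
  refine ⟨h0.trans hz, fun u h => ?_, fun u h => ?_, fun u h => ?_, fun u h => ?_⟩
  · simp [hu u h]
  · rw [hu u h]; omega
  · have g := gunits_mul u h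
    have := hd u h
    have := hb.unit _ g.2.1
    rw [hu u h, hu _ g.1]; omega
  · have g := gunits_mul u h
    have := hd u h
    have := hb.zeroUnit _ g.2.1
    rw [hu u h, hu _ g.1]; omega

lemma Bounds.digit {s t : GaussianInt} {N : ℕ} (hs : s ∈ gunits) (h : IsNafValue t N)
    (hb : Bounds (critCount t N) N) : Bounds (critCount (s + gβ ^ 3 * t) (N + 1)) (N + 1) := by
  obtain ⟨k1, k2, k3, k4, k5, k6, k7, k8, k9⟩ := digitCrit_eq s hs
  obtain ⟨g1, g2, g3, g4, g5, g6⟩ := gunits_mul s hs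
  have b0 := critCount_digit h hs (c := 0) (by decide)
  have b1 := critCount_digit h hs (mem_carries _ hs).1
  have b2 := critCount_digit h hs (mem_carries _ g3).1
  have b3 := critCount_digit h hs (mem_carries _ g2).1
  have b4 := critCount_digit h hs (mem_carries _ g1).1
  have d1 := critCount_digit h hs (mem_carries _ hs).2
  have d2 := critCount_digit h hs (mem_carries _ g3).2
  have d3 := critCount_digit h hs (mem_carries _ g2).2
  have d4 := critCount_digit h hs (mem_carries _ g1).2
  rw [(k1.map _).sum_eq] at b0
  rw [(k2.map _).sum_eq] at b1
  rw [k3] at b2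
  rw [k4] at b3
  rw [k5] at b4
  rw [k6] at d1
  rw [k7] at d2
  rw [k8] at d3
  rw [k9] at d4
  simp only [List.map_cons, List.map_nil, List.sum_cons, List.sum_nil] at b0 b1 b2 b3 b4 d1 d2 d3 d4
  have hz := hb.zero
  have hu1 := hb.unit s hs
  have hu2 := hb.unit _ g1
  have hl1 := hb.zeroUnit s hs
  have hl2 := hb.zeroUnit _ g1
  have ha := hb.adj s hs
  have hf := hb.full s hs
  obtain ⟨f1, f2, f3, f4, f5, f6, f7⟩ := seq_facts N
  refine ⟨?_, fun u h => ?_, fun u h => ?_, fun u h => ?_, fun u h => ?_⟩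
  · show _ ≤ rho (N + 2)
    omega
  all_goals
    simp only [Nat.add_assoc, Nat.reduceAdd] at *
    rcases gunits_rot s hs u h with rfl | rfl | rfl | rfl <;>
    simp only [g4, g5, g6] at * <;> omega

lemma bounds_of_isNafValue {z : GaussianInt} {N : ℕ} (h : IsNafValue z N) :
    Bounds (critCount z N) N := by
  induction h with
  | zero => exact Bounds.base
  | shift h ih => exact ih.shift h
  | digit s hs h ih => exact ih.digit hs h

/-! ### Reading a 3-NAF digit by digit -/

lemma gNAF_tail {d : GaussianInt} {l : List GaussianInt} (h : gNAF 3 (d :: l)) : gNAF 3 l := by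
  intro j k hjk hk hj
  simpa using h (j + 1) (k + 1) (by omega) (by omega) (by simpa using hj)

lemma isNafValue_of_gNAF : ∀ l : List GaussianInt, (∀ d ∈ l, d ∈ gD) → gNAF 3 l →
    IsNafValue (gval l) (gweight l) := by
  intro l
  induction hn : l.length using Nat.strong_induction_on generalizing l with
  | _ n ih =>
    intro hD hnaf
    match l with
    | [] => exact IsNafValue.zero
    | d :: l =>
      rcases mem_gD_iff.1 (hD d (by simp)) with rfl | hd
      · rw [gval_cons, zero_add, gweight_zero_cons]
        refine IsNafValue.shift (ih l.length ?_ l rfl (fun e he => hD e (by simp [he]))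
          (gNAF_tail hnaf))
        simp at hn
        omega
      · have hd0 := ne_zero_of_mem_gunits d hd
        rw [gweight_cons hd0]
        have h1 : l.getD 0 0 = 0 := by
          simpa using hnaf 0 1 (by omega) (by omega) (by simpa using hd0)
        have h2 : l.getD 1 0 = 0 := by
          simpa using hnaf 0 2 (by omega) (by omega) (by simpa using hd0)
        match l with
        | [] =>
          simpa [gval, gweight] using IsNafValue.digit d hd IsNafValue.zero
        | [e] =>
          obtain rfl : e = 0 := by simpa using h1
          simpa [gval, gweight] using IsNafValue.digit d hd IsNafValue.zero
        | e :: e' :: l =>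
          obtain rfl : e = 0 := by simpa using h1
          obtain rfl : e' = 0 := by simpa using h2
          have := IsNafValue.digit d hd (ih l.length (by simp at hn; omega) l rfl
            (fun e he => hD e (by simp [he])) (gNAF_tail (gNAF_tail (gNAF_tail hnaf))))
          rw [gweight_zero_cons, gweight_zero_cons]
          convert this using 1
          simp only [gval_cons]
          ring


/-- If the 3-NAF representation of `x` has exactly `N ≥ 1` nonzero digits,
then `x` has at most `r_N` optimal representations. -/
theorem stmt8 (N : ℕ) (hN : 1 ≤ N) (x : GaussianInt) (l : List GaussianInt)
    (hrep : gIsRep x l) (hnaf : gNAF 3 l) (hw : gweight l = N) :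
    gnumOpt x ≤ rseq N := by
  have hz : IsNafValue x N := by
    have := isNafValue_of_gNAF l hrep.1 hnaf
    rwa [hrep.2, hw] at this
  have hb : repCount x (N + 1) ≤ rseq N := by
    simpa [critCount, deficit, rho] using (bounds_of_isNafValue hz).zero
  refine le_trans ?_ hb
  -- The given 3-NAF caps the weight of every optimal representation by `N`.
  have hsub : {l | gOptimal x l} ⊆ repSet x (N + 1) := by
    rintro l' ⟨h1, h2, h3⟩
    have := h3 l hrep
    exact ⟨h1, h2, by omega⟩
  exact Set.ncard_le_ncard hsub (repSet_finite _ _)
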